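/- The fixed point α of ζ in (−1,0) satisfies |ζ'(α)| < 1, hence α is an attracting fixed point of the iteration s ↦ ζ(s). -/

import Mathlib

/-!
Two integrations by parts in `∫ x^(-s)` over unit intervals (the Euler-Maclaurin formula) give

  `ζ(s) = 1 / (s - 1) + 1 / 2 + s (s + 1) / 2 * G(s)`,
  `G(s) = ∫_1^∞ {x} (1 - {x}) x^(-s - 2) dx`,

first for `re s > 1` (`zeta_eq_of_one_lt_re`), then for `re s > -1`, `s ≠ 1`, by the identity
theorem (`zeta_eq_of_neg_one_lt_re`), as `G` is a Mellin transform and so is holomorphic there.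
Since `0 ≤ {x} (1 - {x}) ≤ 1 / 4`, one has `‖G(σ)‖ ≤ 1 / (4 (σ + 1))` and
`‖G'(σ)‖ ≤ 1 / (σ + 1)^2` for real `σ > -1`. The first bound shows that a fixed point `α ∈ (-1, 0)`
lies in `(-1/3, -1/4)`. On that interval, differentiating the formula and using both bounds gives
`‖ζ'(α)‖ ≤ 16/25 + 3/32 + 1/4 < 1`.
-/

open Set Filter Topology MeasureTheory

namespace ZetaFixedPoint

/-! ### The kernel and its Mellin transform -/

/-- The kernel `{x} (1 - {x})`, i.e. `1/6` minus the periodized second Bernoulli polynomial,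
cut off to `x > 1`; complex-valued so that its Mellin transform can be taken. -/
noncomputable def kern : ℝ → ℂ :=
  (Ioi (1 : ℝ)).indicator fun x => ((Int.fract x * (1 - Int.fract x) : ℝ) : ℂ)

/-- `G s = ∫_1^∞ {x} (1 - {x}) x^(-s - 2) dx`, as a Mellin transform. -/
noncomputable def G (s : ℂ) : ℂ := mellin kern (-s - 1)

lemma kern_of_le {x : ℝ} (hx : x ≤ 1) : kern x = 0 := by
  simp [kern, hx]

lemma norm_kern_le (x : ℝ) : ‖kern x‖ ≤ 1 / 4 := by
  unfold kern
  refine (norm_indicator_le_norm_self _ _).trans ?_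
  have h0 := Int.fract_nonneg x
  have h1 := (Int.fract_lt_one x).le
  rw [Complex.norm_real, Real.norm_of_nonneg (by nlinarith)]
  nlinarith [sq_nonneg (Int.fract x - 1 / 2)]

lemma measurable_kern : Measurable kern := by
  unfold kern
  refine Measurable.indicator ?_ measurableSet_Ioi
  exact Complex.measurable_ofReal.comp
    (measurable_fract.mul (measurable_const.sub measurable_fract))

lemma locallyIntegrableOn_kern : LocallyIntegrableOn kern (Ioi 0) := by
  refine LocallyIntegrable.locallyIntegrableOn ?_ _
  refine (locallyIntegrable_const (1 / 4 : ℝ)).mono measurable_kern.aestronglyMeasurable ?_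
  filter_upwards with x
  simpa using norm_kern_le x

lemma kern_isBigO_top : kern =O[atTop] (fun x : ℝ => x ^ (-(0 : ℝ))) := by
  refine Asymptotics.IsBigO.of_bound (1 / 4) (Eventually.of_forall fun x => ?_)
  simpa using norm_kern_le x

lemma kern_isBigO_zero (b : ℝ) : kern =O[𝓝[>] 0] (fun x : ℝ => x ^ (-b)) := by
  refine Asymptotics.IsBigO.of_bound 1 ?_
  filter_upwards [mem_nhdsWithin_of_mem_nhds (Iio_mem_nhds (zero_lt_one' ℝ))] with x hx
  rw [kern_of_le (le_of_lt hx)]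
  simp

lemma mellin_kern {z : ℂ} (hz : z.re < 0) :
    MellinConvergent kern z ∧
      HasDerivAt (mellin kern) (mellin (fun t => Real.log t • kern t) z) z :=
  ⟨mellinConvergent_of_isBigO_rpow locallyIntegrableOn_kern kern_isBigO_top hz
      (kern_isBigO_zero (z.re - 1)) (by linarith),
    (mellin_hasDerivAt_of_isBigO_rpow locallyIntegrableOn_kern kern_isBigO_top hz
      (kern_isBigO_zero (z.re - 1)) (by linarith)).2⟩

lemma norm_mellin_le {f : ℝ → ℂ} {C b : ℝ} {z : ℂ} (h0 : ∀ t ≤ 1, f t = 0)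
    (h1 : ∀ t, 1 < t → ‖f t‖ ≤ C * t ^ b) (hz : z.re + b < 0) :
    ‖mellin f z‖ ≤ C / (-(z.re + b)) := by
  have hint : IntegrableOn (fun t : ℝ => C * t ^ (z.re + b - 1)) (Ioi 1) :=
    (integrableOn_Ioi_rpow_of_lt (by linarith) one_pos).const_mul C
  have hval : ∫ t in Ioi (1 : ℝ), C * t ^ (z.re + b - 1) = C / (-(z.re + b)) := by
    rw [integral_const_mul, integral_Ioi_rpow_of_lt (by linarith) one_pos]
    simp only [Real.one_rpow, sub_add_cancel]
    rw [div_neg, div_eq_mul_inv, div_eq_mul_inv]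
    ring
  have hred : mellin f z = ∫ t in Ioi (1 : ℝ), (t : ℂ) ^ (z - 1) • f t := by
    unfold mellin
    refine setIntegral_eq_of_subset_of_forall_sdiff_eq_zero measurableSet_Ioi
      (Ioi_subset_Ioi zero_le_one) ?_
    rintro t ⟨_, ht⟩
    rw [h0 t (not_lt.mp ht), smul_zero]
  rw [hred, ← hval]
  refine norm_integral_le_of_norm_le hint ?_
  filter_upwards [ae_restrict_mem measurableSet_Ioi] with t ht
  have ht1 : (1 : ℝ) < t := ht
  have ht0 : 0 < t := by linarith
  rw [norm_smul, Complex.norm_cpow_eq_rpow_re_of_pos ht0, Complex.sub_re, Complex.one_re]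
  calc t ^ (z.re - 1) * ‖f t‖ ≤ t ^ (z.re - 1) * (C * t ^ b) :=
        mul_le_mul_of_nonneg_left (h1 t ht1) (by positivity)
    _ = C * t ^ (z.re + b - 1) := by
        rw [show z.re + b - 1 = (z.re - 1) + b by ring, Real.rpow_add ht0]
        ring

lemma norm_G_le {s : ℂ} (hs : -1 < s.re) : ‖G s‖ ≤ 1 / (4 * (s.re + 1)) := by
  have h := norm_mellin_le (f := kern) (C := 1 / 4) (b := 0) (z := -s - 1)
    (fun t ht => kern_of_le ht) (fun t _ => by simpa using norm_kern_le t)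
    (by simp; linarith)
  refine h.trans_eq ?_
  simp only [Complex.sub_re, Complex.neg_re, Complex.one_re]
  rw [div_div]
  congr 2
  ring

/-- The derivative of `G`, together with a bound coming from `log t ≤ t^ε / ε`. -/
lemma hasDerivAt_G {s : ℂ} (hs : -1 < s.re) :
    ∃ D : ℂ, HasDerivAt G D s ∧ ‖D‖ ≤ 1 / (s.re + 1) ^ 2 := by
  have hz : (-s - 1).re < 0 := by simp; linarith
  have hd := (mellin_kern hz).2
  have hlin : HasDerivAt (fun s : ℂ => -s - 1) (-1) s := ((hasDerivAt_id s).neg).sub_const 1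
  refine ⟨_, hd.comp s hlin, ?_⟩
  rw [norm_mul, norm_neg, norm_one, mul_one]
  have hp : 0 < s.re + 1 := by linarith
  -- The choice `ε = (re s + 1) / 2` minimizes the resulting bound `1 / (4 ε (re s + 1 - ε))`.
  have h := norm_mellin_le (f := fun t => Real.log t • kern t) (C := 1 / (2 * (s.re + 1)))
    (b := (s.re + 1) / 2) (z := -s - 1)
    (fun t ht => by rw [kern_of_le ht, smul_zero]) (fun t ht => by
      have hl : Real.log t ≤ t ^ ((s.re + 1) / 2) / ((s.re + 1) / 2) :=
        Real.log_le_rpow_div (by linarith) (by positivity)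
      have hl0 : 0 ≤ Real.log t := Real.log_nonneg ht.le
      rw [norm_smul, Real.norm_of_nonneg hl0]
      calc Real.log t * ‖kern t‖
          ≤ (t ^ ((s.re + 1) / 2) / ((s.re + 1) / 2)) * (1 / 4) :=
            mul_le_mul hl (norm_kern_le t) (norm_nonneg _) (hl0.trans hl)
        _ = 1 / (2 * (s.re + 1)) * t ^ ((s.re + 1) / 2) := by field_simp; norm_num)
    (by simp; linarith)
  refine h.trans_eq ?_
  simp only [Complex.sub_re, Complex.neg_re, Complex.one_re]
  rw [show -(-s.re - 1 + (s.re + 1) / 2) = (s.re + 1) / 2 by ring]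
  field_simp

/-! ### The Euler-Maclaurin formula for `re s > 1` -/

/-- The error of the trapezoidal rule for `x^(-s)` on `[n, n + 1]`. -/
lemma integral_unit {n : ℕ} (hn : 1 ≤ n) {s : ℂ} (hs : 1 < s.re) :
    s * (s + 1) / 2 * ∫ x in (n : ℝ)..((n + 1 : ℕ) : ℝ), (x : ℂ) ^ (-s - 1 - 1) • kern x =
      ((n : ℂ) ^ (-s) + ((n + 1 : ℕ) : ℂ) ^ (-s)) / 2
        - ((n : ℂ) ^ (1 - s) - ((n + 1 : ℕ) : ℂ) ^ (1 - s)) / (s - 1) := by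
  have hn1 : (1 : ℝ) ≤ n := by exact_mod_cast hn
  have hle : (n : ℝ) ≤ ((n + 1 : ℕ) : ℝ) := by push_cast; linarith
  have hs0 : s ≠ 0 := by rintro rfl; norm_num at hs
  have hs1 : s - 1 ≠ 0 := by
    intro h; rw [sub_eq_zero] at h; subst h; norm_num at hs
  have hs2 : s + 1 ≠ 0 := by
    intro h
    have := congrArg Complex.re h
    simp at this
    linarith
  -- The two sides agree at the endpoints as well, since both vanish there.
  have hcongr : ∀ x ∈ uIcc (n : ℝ) ((n + 1 : ℕ) : ℝ),
      (x : ℂ) ^ (-s - 1 - 1) • kern x =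
        -(x : ℂ) ^ (-s) + (2 * n + 1) * (x : ℂ) ^ (-s - 1)
          - n * (n + 1) * (x : ℂ) ^ (-s - 1 - 1) := by
    intro x hx
    rw [uIcc_of_le hle] at hx
    obtain ⟨hx1, hx2⟩ := hx
    push_cast at hx2
    have hx0 : (x : ℂ) ≠ 0 := by
      exact_mod_cast (show x ≠ 0 by linarith)
    have hk : kern x = ((x : ℂ) - n) * (n + 1 - x) := by
      rcases eq_or_lt_of_le hx2 with h | h
      · have h1 : (1 : ℝ) < x := by linarith
        have hf : Int.fract x = 0 := by
          rw [h]
          exact_mod_cast Int.fract_natCast (n + 1)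
        rw [kern, indicator_of_mem (mem_Ioi.mpr h1), hf, h]
        push_cast
        ring
      · have hf : Int.fract x = x - n := by
          rw [Int.fract_eq_iff]
          exact ⟨by linarith, by linarith, n, by simp⟩
        rcases le_or_gt x 1 with h1 | h1
        · have : x = n := by linarith
          rw [kern_of_le h1, this]
          simp
        · rw [kern, indicator_of_mem (mem_Ioi.mpr h1), hf]
          push_cast
          ring
    rw [hk, Complex.cpow_sub _ 1 hx0, Complex.cpow_sub _ 1 hx0, Complex.cpow_one, smul_eq_mul]
    field_simp
    ring
  rw [intervalIntegral.integral_congr hcongr]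
  have hderiv : ∀ x ∈ uIcc (n : ℝ) ((n + 1 : ℕ) : ℝ),
      HasDerivAt (fun x : ℝ => -((x : ℂ) ^ (-s + 1) / (-s + 1))
          + (2 * n + 1) * ((x : ℂ) ^ (-s - 1 + 1) / (-s - 1 + 1))
          - n * (n + 1) * ((x : ℂ) ^ (-s - 1 - 1 + 1) / (-s - 1 - 1 + 1)))
        (-(x : ℂ) ^ (-s) + (2 * n + 1) * (x : ℂ) ^ (-s - 1)
          - n * (n + 1) * (x : ℂ) ^ (-s - 1 - 1)) x := by
    intro x hx
    rw [uIcc_of_le hle] at hx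
    have hx0 : x ≠ 0 := by linarith [hx.1]
    refine ((hasDerivAt_ofReal_cpow_const' hx0 ?_).neg.add
      ((hasDerivAt_ofReal_cpow_const' hx0 ?_).const_mul _)).sub
      ((hasDerivAt_ofReal_cpow_const' hx0 ?_).const_mul _)
    · intro h; apply hs1; linear_combination -h
    · intro h; apply hs0; linear_combination -h
    · intro h; apply hs2; linear_combination -h
  have hcont : ∀ r : ℂ, ContinuousOn (fun x : ℝ => (x : ℂ) ^ r)
      (uIcc (n : ℝ) ((n + 1 : ℕ) : ℝ)) := by
    intro r x hx
    rw [uIcc_of_le hle] at hx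
    exact (Complex.continuousAt_ofReal_cpow_const x r
      (Or.inr (by linarith [hx.1]))).continuousWithinAt
  rw [intervalIntegral.integral_eq_sub_of_hasDerivAt hderiv]
  · have hA : (n : ℂ) ≠ 0 := by exact_mod_cast (show n ≠ 0 by omega)
    have hB : (n : ℂ) + 1 ≠ 0 := by exact_mod_cast (show n + 1 ≠ 0 by omega)
    have e1 : 1 - s = -s + 1 := by ring
    have e2 : -s - 1 + 1 = -s := by ring
    have e3 : -s - 1 - 1 + 1 = -s - 1 := by ring
    have e4 : -s + 1 ≠ 0 := by intro h; apply hs1; linear_combination -h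
    have e5 : -s - 1 ≠ 0 := by intro h; apply hs2; linear_combination -h
    push_cast
    rw [e1, e2, e3, Complex.cpow_add _ _ hA, Complex.cpow_add _ _ hB,
      Complex.cpow_sub _ _ hA, Complex.cpow_sub _ _ hB, Complex.cpow_one, Complex.cpow_one]
    generalize (n : ℂ) ^ (-s) = P
    generalize ((n : ℂ) + 1) ^ (-s) = Q
    rw [show -s + 1 = -(s - 1) by ring, show -s - 1 = -(s + 1) by ring]
    field_simp
    ring
  · refine ContinuousOn.intervalIntegrable ?_
    exact (((hcont _).neg).add ((hcont _).const_smul (2 * n + 1 : ℂ))).sub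
      ((hcont _).const_smul (n * (n + 1) : ℂ))

lemma integrableOn_kern {s : ℂ} (hs : -1 < s.re) :
    IntegrableOn (fun x : ℝ => (x : ℂ) ^ (-s - 1 - 1) • kern x) (Ioi 1) :=
  (mellin_kern (z := -s - 1) (by simp; linarith)).1.mono_set (Ioi_subset_Ioi zero_le_one)

lemma integral_partial (N : ℕ) {s : ℂ} (hs : 1 < s.re) :
    s * (s + 1) / 2 * ∫ x in (1 : ℝ)..((N + 1 : ℕ) : ℝ), (x : ℂ) ^ (-s - 1 - 1) • kern x =
      ∑ n ∈ Finset.range N, 1 / ((n : ℂ) + 1) ^ s - 1 / 2 + ((N + 1 : ℕ) : ℂ) ^ (-s) / 2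
        - 1 / (s - 1) + ((N + 1 : ℕ) : ℂ) ^ (1 - s) / (s - 1) := by
  induction N with
  | zero => simp
  | succ N ih =>
    have hii : ∀ a b : ℕ, 1 ≤ a → 1 ≤ b → IntervalIntegrable
        (fun x : ℝ => (x : ℂ) ^ (-s - 1 - 1) • kern x) volume (a : ℝ) (b : ℝ) := by
      intro a b ha hb
      rw [intervalIntegrable_iff]
      refine (integrableOn_kern (s := s) (by linarith)).mono_set fun x hx => ?_
      have : (1 : ℝ) ≤ min (a : ℝ) b := le_min (by exact_mod_cast ha) (by exact_mod_cast hb)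
      exact this.trans_lt hx.1
    have h1 := hii 1 (N + 1) le_rfl (by omega)
    rw [Nat.cast_one] at h1
    rw [← intervalIntegral.integral_add_adjacent_intervals h1
      (hii (N + 1) (N + 1 + 1) (by omega) (by omega)), mul_add, ih,
      integral_unit (by omega) hs, Finset.sum_range_succ]
    have : 1 / ((N : ℂ) + 1) ^ s = ((N + 1 : ℕ) : ℂ) ^ (-s) := by
      rw [Complex.cpow_neg, one_div]
      push_cast
      rfl
    rw [this]
    ring

lemma tendsto_natCast_cpow {r : ℂ} (hr : r.re < 0) :
    Tendsto (fun N : ℕ => ((N + 1 : ℕ) : ℂ) ^ r) atTop (𝓝 0) := by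
  rw [tendsto_zero_iff_norm_tendsto_zero]
  have h : Tendsto (fun N : ℕ => ((N + 1 : ℕ) : ℝ) ^ (-(-r.re))) atTop (𝓝 0) :=
    (tendsto_rpow_neg_atTop (by linarith)).comp
      (tendsto_natCast_atTop_atTop.comp (tendsto_add_atTop_nat 1))
  refine h.congr fun N => ?_
  rw [Complex.norm_natCast_cpow_of_pos (Nat.succ_pos N), neg_neg]

lemma zeta_eq_of_one_lt_re {s : ℂ} (hs : 1 < s.re) :
    riemannZeta s = 1 / (s - 1) + 1 / 2 + s * (s + 1) / 2 * G s := by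
  have hG : G s = ∫ t in Ioi (1 : ℝ), (t : ℂ) ^ (-s - 1 - 1) • kern t := by
    unfold G mellin
    refine setIntegral_eq_of_subset_of_forall_sdiff_eq_zero measurableSet_Ioi
      (Ioi_subset_Ioi zero_le_one) ?_
    rintro t ⟨_, ht⟩
    rw [kern_of_le (not_lt.mp ht), smul_zero]
  have hL : Tendsto (fun N : ℕ => s * (s + 1) / 2 *
      ∫ x in (1 : ℝ)..((N + 1 : ℕ) : ℝ), (x : ℂ) ^ (-s - 1 - 1) • kern x) atTop
      (𝓝 (s * (s + 1) / 2 * G s)) := by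
    rw [hG]
    exact (intervalIntegral_tendsto_integral_Ioi 1 (integrableOn_kern (by linarith))
      (tendsto_natCast_atTop_atTop.comp (tendsto_add_atTop_nat 1))).const_mul _
  have hsum : Summable fun n : ℕ => 1 / ((n : ℂ) + 1) ^ s := by
    have := (summable_nat_add_iff 1).mpr (Complex.summable_one_div_nat_cpow.mpr hs)
    simpa using this
  have hZ := hsum.hasSum.tendsto_sum_nat
  rw [← zeta_eq_tsum_one_div_nat_add_one_cpow hs] at hZ
  have hR := (((hZ.sub_const (1 / 2)).add
    ((tendsto_natCast_cpow (r := -s) (by simp; linarith)).div_const 2)).sub_const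
      (1 / (s - 1))).add
    ((tendsto_natCast_cpow (r := 1 - s) (by simp; linarith)).div_const (s - 1))
  have h := tendsto_nhds_unique (hL.congr fun N => integral_partial N hs) hR
  rw [h]
  ring

/-! ### Continuation to `re s > -1` -/

/-- Multiplying by `s - 1` and filling in the value `1` at `s = 1` makes both sides holomorphic
on the half-plane `re s > -1`, to which the identity theorem then applies. -/
lemma zeta_eq_of_neg_one_lt_re {s : ℂ} (hs : -1 < s.re) (hs1 : s ≠ 1) :
    riemannZeta s = 1 / (s - 1) + 1 / 2 + s * (s + 1) / 2 * G s := by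
  set U : Set ℂ := {s | -1 < s.re} with hU
  have hUo : IsOpen U := isOpen_lt continuous_const Complex.continuous_re
  have hUc : IsPreconnected U := (convex_halfSpace_re_gt (-1)).isPreconnected
  let f : ℂ → ℂ := Function.update (fun s => (s - 1) * riemannZeta s) 1 1
  let g : ℂ → ℂ := fun s => 1 + (s - 1) * (1 / 2 + s * (s + 1) / 2 * G s)
  have hf : DifferentiableOn ℂ f U := by
    refine (Complex.differentiableOn_compl_singleton_and_continuousAt_iff
      (hUo.mem_nhds (by simp [hU] : (1 : ℂ) ∈ U))).mp ⟨?_, ?_⟩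
    · rintro z ⟨_, hz⟩
      have hz : z ≠ 1 := hz
      refine DifferentiableAt.differentiableWithinAt ?_
      have hd : DifferentiableAt ℂ (fun s => (s - 1) * riemannZeta s) z :=
        (differentiableAt_id.sub_const 1).mul (differentiableAt_riemannZeta hz)
      refine hd.congr_of_eventuallyEq ?_
      filter_upwards [isOpen_ne.mem_nhds hz] with w hw
      exact Function.update_of_ne hw _ _
    · exact continuousAt_update_same.mpr riemannZeta_residue_one
  have hg : DifferentiableOn ℂ g U := by
    intro z hz
    obtain ⟨D, hD, _⟩ := hasDerivAt_G (s := z) hz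
    have hGd := hD.differentiableAt
    refine DifferentiableAt.differentiableWithinAt ?_
    fun_prop
  have hev : f =ᶠ[𝓝 2] g := by
    have : {s : ℂ | 1 < s.re} ∈ 𝓝 (2 : ℂ) :=
      (isOpen_lt continuous_const Complex.continuous_re).mem_nhds (by simp)
    filter_upwards [this] with z hz
    have hz1 : z ≠ 1 := by rintro rfl; simp at hz
    have hz2 : z - 1 ≠ 0 := sub_ne_zero.mpr hz1
    simp only [f, g, Function.update_of_ne hz1]
    rw [zeta_eq_of_one_lt_re hz]
    field_simp
    ring
  have heq := (hf.analyticOnNhd hUo).eqOn_of_preconnected_of_eventuallyEq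
    (hg.analyticOnNhd hUo) hUc (by simp [hU]; norm_num : (2 : ℂ) ∈ U) hev hs
  simp only [f, g, Function.update_of_ne hs1] at heq
  have h1 : s - 1 ≠ 0 := sub_ne_zero.mpr hs1
  refine mul_left_cancel₀ h1 (heq.trans ?_)
  field_simp
  ring

/-! ### Location of the fixed point, and the derivative there -/

/-- A fixed point in `(-1, 0)` satisfies `|α - 1/2 - 1/(α - 1)| ≤ |α| / 8`, which confines it. -/
lemma fixed_point_mem {α : ℝ} (h1 : -1 < α) (h0 : α < 0) (h : riemannZeta (α : ℂ) = (α : ℂ)) :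
    -1 / 3 < α ∧ α < -1 / 4 := by
  have hp : 0 < α + 1 := by linarith
  have hne : α - 1 ≠ 0 := by linarith
  have hz := zeta_eq_of_neg_one_lt_re (s := (α : ℂ)) (by simpa using h1)
    (by exact_mod_cast (show α ≠ 1 by linarith))
  rw [h] at hz
  have hG := norm_G_le (s := (α : ℂ)) (by simpa using h1)
  rw [Complex.ofReal_re] at hG
  have he : ((α - 1 / 2 - 1 / (α - 1) : ℝ) : ℂ) = ((α * (α + 1) / 2 : ℝ) : ℂ) * G α := by
    push_cast
    linear_combination hz
  have hb : |α - 1 / 2 - 1 / (α - 1)| ≤ -α / 8 := by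
    calc |α - 1 / 2 - 1 / (α - 1)| = ‖((α - 1 / 2 - 1 / (α - 1) : ℝ) : ℂ)‖ := by
          rw [Complex.norm_real, Real.norm_eq_abs]
      _ = -(α * (α + 1) / 2) * ‖G α‖ := by
          rw [he, norm_mul, Complex.norm_real, Real.norm_of_nonpos (by nlinarith)]
      _ ≤ -(α * (α + 1) / 2) * (1 / (4 * (α + 1))) :=
          mul_le_mul_of_nonneg_left hG (by nlinarith)
      _ = -α / 8 := by field_simp; ring
  obtain ⟨hl, hr⟩ := abs_le.mp hb
  have hi : 1 / (α - 1) * (α - 1) = 1 := by field_simp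
  constructor <;> by_contra! hcon <;> nlinarith

end ZetaFixedPoint

open ZetaFixedPoint

theorem zeta_fixed_point_attracting :
    ∀ α : ℝ, -1 < α → α < 0 → riemannZeta (α : ℂ) = (α : ℂ) →
      ‖deriv riemannZeta (α : ℂ)‖ < 1 := by
  intro α h1 h0 h
  obtain ⟨hlo, hhi⟩ := fixed_point_mem h1 h0 h
  have hre : -1 < (α : ℂ).re := by simpa using h1
  have hα1 : (α : ℂ) ≠ 1 := by exact_mod_cast (show α ≠ 1 by linarith)
  obtain ⟨D, hD, hDb⟩ := hasDerivAt_G hre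
  have hG := norm_G_le hre
  rw [Complex.ofReal_re] at hDb hG
  have hev : riemannZeta =ᶠ[𝓝 (α : ℂ)]
      fun s => (s - 1)⁻¹ + 1 / 2 + s * (s + 1) / 2 * G s := by
    filter_upwards [(isOpen_lt continuous_const Complex.continuous_re).mem_nhds hre,
      isOpen_ne.mem_nhds hα1] with s hs hs1
    rw [zeta_eq_of_neg_one_lt_re hs hs1, one_div]
  have hid := hasDerivAt_id (α : ℂ)
  have hder : HasDerivAt (fun s : ℂ => (s - 1)⁻¹ + 1 / 2 + s * (s + 1) / 2 * G s)
      (-1 / ((α : ℂ) - 1) ^ 2 + ((1 * (α + 1) + α * 1) / 2 * G α + α * (α + 1) / 2 * D)) α :=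
    (((hid.sub_const 1).inv (sub_ne_zero.mpr hα1)).add_const (1 / 2)).add
      (((hid.mul (hid.add_const 1)).div_const 2).mul hD)
  rw [hev.deriv_eq, hder.deriv]
  have hp : 2 / 3 < α + 1 := by linarith
  have t1 : ‖-1 / ((α : ℂ) - 1) ^ 2‖ ≤ 16 / 25 := by
    rw [show -1 / ((α : ℂ) - 1) ^ 2 = ((-1 / (α - 1) ^ 2 : ℝ) : ℂ) by push_cast; rfl,
      Complex.norm_real, norm_div, norm_neg, norm_one, Real.norm_of_nonneg (sq_nonneg _),
      div_le_iff₀ (by nlinarith)]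
    nlinarith
  have t2 : ‖(1 * ((α : ℂ) + 1) + α * 1) / 2 * G α‖ ≤ 3 / 32 := by
    rw [show (1 * ((α : ℂ) + 1) + α * 1) / 2 = (((2 * α + 1) / 2 : ℝ) : ℂ) by push_cast; ring,
      norm_mul, Complex.norm_real, Real.norm_of_nonneg (by linarith)]
    have hG' : ‖G α‖ ≤ 3 / 8 := hG.trans (by
      rw [div_le_iff₀ (by linarith)]
      linarith)
    nlinarith [norm_nonneg (G α)]
  have t3 : ‖(α : ℂ) * (α + 1) / 2 * D‖ ≤ 1 / 4 := by
    rw [show (α : ℂ) * (α + 1) / 2 = ((α * (α + 1) / 2 : ℝ) : ℂ) by push_cast; ring,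
      norm_mul, Complex.norm_real, Real.norm_of_nonpos (by nlinarith)]
    calc -(α * (α + 1) / 2) * ‖D‖ ≤ -(α * (α + 1) / 2) * (1 / (α + 1) ^ 2) :=
          mul_le_mul_of_nonneg_left hDb (by nlinarith)
      _ = -α / (2 * (α + 1)) := by
          have : α + 1 ≠ 0 := by linarith
          field_simp
      _ ≤ 1 / 4 := by
          rw [div_le_iff₀ (by linarith)]
          linarith
  have := norm_add_le (-1 / ((α : ℂ) - 1) ^ 2)
    ((1 * ((α : ℂ) + 1) + α * 1) / 2 * G α + α * (α + 1) / 2 * D)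
  have := norm_add_le ((1 * ((α : ℂ) + 1) + α * 1) / 2 * G α) ((α : ℂ) * (α + 1) / 2 * D)
  linarith
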